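/- Let F be an algebraically closed field, let t and k be positive integers with 1 ≤ k ≤ t + 1, and set n = 2t + 1. Let S be a finite generating system of the full matrix algebra M_n(F) with m(S) = t + k. Then ℓ(S) ≤ 3n − 5. -/

import Mathlib

open Polynomial Matrix

/-- The `F`-linear span of all words over `S` of length at most `i`
(the empty word being `1`). -/
def wordSpan (F : Type*) {A : Type*} [Field F] [Ring A] [Algebra F A]
    (S : Set A) (i : ℕ) : Submodule F A :=
  Submodule.span F {x : A | ∃ l : List A, l.length ≤ i ∧ (∀ a ∈ l, a ∈ S) ∧ l.prod = x}

/-- `S` is a generating system of the algebra `A`: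
`A` is the union of the subspaces `wordSpan F S i`. -/
def IsGeneratingSystem (F : Type*) {A : Type*} [Field F] [Ring A] [Algebra F A]
    (S : Set A) : Prop :=
  ∀ x : A, ∃ i : ℕ, x ∈ wordSpan F S i

/-- The length of a generating system `S`: the least `k` with `wordSpan F S k = ⊤`. -/
noncomputable def genLength (F : Type*) {A : Type*} [Field F] [Ring A] [Algebra F A]
    (S : Set A) : ℕ :=
  sInf {k : ℕ | wordSpan F S k = ⊤}

/-!
Write `n` for the size of the matrices and `L_i` for `wordSpan F S i`. Let `A ∈ L_1` have a minimal
polynomial of degree `m` with `n < 2 * m`. Peeling the linear factors off the minimal polynomial one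
at a time, Frobenius' rank inequality shows that if every nonzero element of `F[A]` had rank at
least two, the identity would have rank at least `2 * m`. Hence `F[A] ≤ L_{m-1}` contains a matrix
`u vᵀ` of rank one.

The orbits `L_i u` grow strictly until they fill `Fⁿ`, so `L_{n-1} u = Fⁿ`, and dually
`vᵀ L_{n-1} = Fⁿ`. If already `L_{n-2} u = Fⁿ`, then `L_{n-2} (u vᵀ) L_{n-1}` spans all matrices and
the length is at most `2 * n + m - 4`. Otherwise the dimension of `L_i u` grows by exactly one in
each step. A generic `C ∈ L_1` stabilises none of the proper orbits, because over an infinite field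
`L_1` is not a finite union of proper subspaces; then `u` is a cyclic vector of `C`, whose minimal
polynomial therefore has degree `n`.

If `C ∈ L_1` has a minimal polynomial of degree `n`, then `F[C] L_{n-1}` is everything and the
length is at most `2 * n - 2`. Otherwise the annihilator of this subspace under the trace form
contains a nonzero `Y` with `Y C = μ Y`. As `C - μ` has rank at least `n - 1`, this `Y` is of the
form `u vᵀ`, and it annihilates `L_{n-1}` although `vᵀ L_{n-1} = Fⁿ`.
-/

section WordSpan

variable {F A : Type*} [Field F] [Ring A] [Algebra F A] {S : Set A}

theorem wordSpan_mono : Monotone (wordSpan F S) := fun _ _ hij ↦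
  Submodule.span_mono fun _ ⟨l, hl, hlS, hx⟩ ↦ ⟨l, hl.trans hij, hlS, hx⟩

theorem one_mem_wordSpan (i : ℕ) : (1 : A) ∈ wordSpan F S i :=
  Submodule.subset_span ⟨[], by simp⟩

theorem mem_wordSpan_one {a : A} (ha : a ∈ S) : a ∈ wordSpan F S 1 :=
  Submodule.subset_span ⟨[a], by simpa using ha⟩

theorem wordSpan_zero : wordSpan F S 0 = F ∙ (1 : A) := by
  refine congrArg (Submodule.span F) (Set.ext fun x ↦ ?_)
  simp +contextual [eq_comm]

theorem wordSpan_mul_le (i j : ℕ) : wordSpan F S i * wordSpan F S j ≤ wordSpan F S (i + j) := by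
  rw [wordSpan, wordSpan, Submodule.span_mul_span]
  refine Submodule.span_mono ?_
  rintro _ ⟨_, ⟨l, hl, hlS, rfl⟩, _, ⟨m, hm, hmS, rfl⟩, rfl⟩
  refine ⟨l ++ m, by grind, fun a ha ↦ ?_, List.prod_append⟩
  exact (List.mem_append.1 ha).elim (hlS a) (hmS a)

theorem mul_mem_wordSpan {i j : ℕ} {a b : A} (ha : a ∈ wordSpan F S i)
    (hb : b ∈ wordSpan F S j) : a * b ∈ wordSpan F S (i + j) :=
  wordSpan_mul_le i j (Submodule.mul_mem_mul ha hb)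

theorem pow_mem_wordSpan {a : A} (ha : a ∈ wordSpan F S 1) (i : ℕ) : a ^ i ∈ wordSpan F S i := by
  induction i with
  | zero => exact pow_zero a ▸ one_mem_wordSpan 0
  | succ i ih => exact pow_succ a i ▸ mul_mem_wordSpan ih ha

theorem genLength_le {i : ℕ} (hi : wordSpan F S i = ⊤) : genLength F S ≤ i :=
  Nat.sInf_le hi

theorem wordSpan_le_adjoin (i : ℕ) : wordSpan F S i ≤ (Algebra.adjoin F S).toSubmodule := by
  refine Submodule.span_le.2 ?_
  rintro _ ⟨l, -, hlS, rfl⟩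
  exact (Algebra.adjoin F S).list_prod_mem fun a ha ↦ Algebra.subset_adjoin (hlS a ha)

theorem adjoin_singleton_le_wordSpan [Algebra.IsIntegral F A] {a : A}
    (ha : a ∈ wordSpan F S 1) :
    (Algebra.adjoin F {a}).toSubmodule ≤ wordSpan F S ((minpoly F a).natDegree - 1) := by
  classical
  rw [← Submodule.span_range_natDegree_eq_adjoin (minpoly.monic (Algebra.IsIntegral.isIntegral a))
    (minpoly.aeval F a), Submodule.span_le]
  intro x hx
  obtain ⟨i, hi, rfl⟩ := Finset.mem_image.1 hx
  exact wordSpan_mono (Nat.le_sub_one_of_lt (Finset.mem_range.1 hi)) (pow_mem_wordSpan ha i)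

end WordSpan

theorem exists_mem_forall_notMem {F E κ : Type*} [Field F] [Infinite F] [AddCommGroup E]
    [Module F E] [Finite κ] {P : Submodule F E} {Q : κ → Submodule F E} (hQ : ∀ i, ¬ P ≤ Q i) :
    ∃ x ∈ P, ∀ i, x ∉ Q i := by
  by_contra! hcover
  obtain ⟨i, hi⟩ := Subspace.exists_eq_top_of_iUnion_eq_univ (p := fun i ↦ (Q i).comap P.subtype)
    (Set.eq_univ_of_forall fun x ↦ Set.mem_iUnion.2 (hcover x x.2))
  exact hQ i (Submodule.comap_subtype_eq_top.1 hi)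

section WordOrbit

variable (F : Type*) {A V : Type*} [Field F] [Ring A] [Algebra F A]
  [AddCommGroup V] [Module F V] [Module A V] [IsScalarTower F A V]

/-- The subspace `L_i(S) u` of an `A`-module, obtained by applying the words of length at most `i`
to a vector `u`. -/
noncomputable def wordOrbit (S : Set A) (u : V) (i : ℕ) : Submodule F V :=
  (wordSpan F S i).map ((LinearMap.toSpanSingleton A V u).restrictScalars F)

variable {F} {S : Set A} {u : V}

theorem mem_wordOrbit {i : ℕ} {v : V} :
    v ∈ wordOrbit F S u i ↔ ∃ a ∈ wordSpan F S i, a • u = v := by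
  simp [wordOrbit]

theorem wordOrbit_mono : Monotone (wordOrbit F S u) := fun _ _ hij ↦
  Submodule.map_mono (wordSpan_mono hij)

theorem self_mem_wordOrbit (i : ℕ) : u ∈ wordOrbit F S u i :=
  mem_wordOrbit.2 ⟨1, one_mem_wordSpan i, one_smul A u⟩

theorem wordOrbit_zero : wordOrbit F S u 0 = F ∙ u := by
  simp [wordOrbit, wordSpan_zero, Submodule.map_span]

theorem smul_mem_wordOrbit {i : ℕ} {a : A} {v : V} (ha : a ∈ wordSpan F S 1)
    (hv : v ∈ wordOrbit F S u i) : a • v ∈ wordOrbit F S u (i + 1) := by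
  obtain ⟨b, hb, rfl⟩ := mem_wordOrbit.1 hv
  exact mem_wordOrbit.2 ⟨a * b, add_comm 1 i ▸ mul_mem_wordSpan ha hb, mul_smul a b u⟩

theorem smul_mem_of_forall_smul_mem (hS : IsGeneratingSystem F S) {W : Submodule F V}
    (hW : ∀ s ∈ S, ∀ v ∈ W, s • v ∈ W) (a : A) {v : V} (hv : v ∈ W) : a • v ∈ W := by
  obtain ⟨i, hi⟩ := hS a
  refine Algebra.adjoin_induction (p := fun a _ ↦ ∀ v ∈ W, a • v ∈ W) hW
    (fun c v hv ↦ ?_) (fun a b _ _ ha hb v hv ↦ ?_) (fun a b _ _ ha hb v hv ↦ ?_)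
    (wordSpan_le_adjoin i hi) v hv
  · simpa using W.smul_mem c hv
  · simpa [add_smul] using W.add_mem (ha v hv) (hb v hv)
  · simpa [mul_smul] using ha _ (hb v hv)

theorem eq_top_of_forall_smul_mem [IsSimpleModule A V] (hS : IsGeneratingSystem F S)
    {W : Submodule F V} (hW : ∀ s ∈ S, ∀ v ∈ W, s • v ∈ W) (hu : u ≠ 0) (huW : u ∈ W) :
    W = ⊤ := by
  refine eq_top_iff.2 fun v _ ↦ ?_
  obtain ⟨a, rfl⟩ := IsSimpleModule.toSpanSingleton_surjective A hu v
  exact smul_mem_of_forall_smul_mem hS hW a huW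

theorem wordOrbit_lt_succ [IsSimpleModule A V] (hS : IsGeneratingSystem F S) (hu : u ≠ 0) {i : ℕ}
    (hi : wordOrbit F S u i ≠ ⊤) : wordOrbit F S u i < wordOrbit F S u (i + 1) := by
  refine lt_of_le_not_ge (wordOrbit_mono i.le_succ) fun hle ↦ hi ?_
  exact eq_top_of_forall_smul_mem hS
    (fun s hs v hv ↦ hle (smul_mem_wordOrbit (mem_wordSpan_one hs) hv)) hu (self_mem_wordOrbit i)

theorem exists_mem_wordSpan_one_moving_wordOrbit [Infinite F] [IsSimpleModule A V]
    (hS : IsGeneratingSystem F S) (hu : u ≠ 0) {d : ℕ} (hd : ∀ i < d, wordOrbit F S u i ≠ ⊤) :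
    ∃ c ∈ wordSpan F S 1, ∀ i < d, ∃ v ∈ wordOrbit F S u i, c • v ∉ wordOrbit F S u i := by
  let stabilizer (i : Fin d) : Submodule F A :=
    ((wordOrbit F S u i).compatibleMaps (wordOrbit F S u i)).comap
      (Algebra.lsmul F F V).toLinearMap
  obtain ⟨c, hc, hcmove⟩ := exists_mem_forall_notMem (P := wordSpan F S 1) (Q := stabilizer)
    fun i hle ↦ hd i i.2 (eq_top_of_forall_smul_mem hS
      (fun s hs v hv ↦ hle (mem_wordSpan_one hs) hv) hu (self_mem_wordOrbit _))
  exact ⟨c, hc, fun i hi ↦ Set.not_subset.1 (hcmove ⟨i, hi⟩)⟩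

theorem finrank_wordOrbit_singleton_le [Algebra.IsIntegral F A] (c : A) (u : V) (i : ℕ) :
    Module.finrank F (wordOrbit F {c} u i) ≤ (minpoly F c).natDegree := by
  classical
  let powers := (Finset.range (minpoly F c).natDegree).image fun k ↦ c ^ k • u
  have hle : wordOrbit F {c} u i ≤ Submodule.span F powers := by
    refine (Submodule.map_mono (wordSpan_le_adjoin i)).trans ?_
    rw [← Submodule.span_range_natDegree_eq_adjoin
      (minpoly.monic (Algebra.IsIntegral.isIntegral c)) (minpoly.aeval F c), Submodule.map_span,
      ← Finset.coe_image, Finset.image_image]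
    rfl
  calc Module.finrank F (wordOrbit F {c} u i)
      ≤ Module.finrank F (Submodule.span F (powers : Set V)) := Submodule.finrank_mono hle
    _ ≤ powers.card := finrank_span_finset_le_card powers
    _ ≤ (minpoly F c).natDegree := Finset.card_image_le.trans_eq (Finset.card_range _)

variable [Module.Finite F V]

theorem wordOrbit_le_wordOrbit_singleton {c : A} (hc : c ∈ wordSpan F S 1) {d : ℕ}
    (hmove : ∀ i < d, ∃ v ∈ wordOrbit F S u i, c • v ∉ wordOrbit F S u i)
    (hgrowth : ∀ i < d, Module.finrank F (wordOrbit F S u (i + 1)) ≤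
      Module.finrank F (wordOrbit F S u i) + 1) :
    wordOrbit F S u d ≤ wordOrbit F {c} u d := by
  induction d with
  | zero => simp only [wordOrbit_zero, le_refl]
  | succ d ih =>
    have ih := ih (fun i hi ↦ hmove i (by omega)) (fun i hi ↦ hgrowth i (by omega))
    obtain ⟨v, hv, hcv⟩ := hmove d d.lt_succ_self
    have hsup : wordOrbit F S u d ⊔ F ∙ (c • v) = wordOrbit F S u (d + 1) := by
      have hlt : wordOrbit F S u d < wordOrbit F S u d ⊔ F ∙ (c • v) := by simpa using hcv
      refine Submodule.eq_of_le_of_finrank_le (sup_le (wordOrbit_mono d.le_succ) ?_)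
        ((hgrowth d d.lt_succ_self).trans (Submodule.finrank_lt_finrank_of_lt hlt))
      simpa using smul_mem_wordOrbit hc hv
    rw [← hsup]
    refine sup_le (ih.trans (wordOrbit_mono d.le_succ)) ?_
    rw [Submodule.span_singleton_le_iff_mem]
    exact smul_mem_wordOrbit (mem_wordSpan_one (Set.mem_singleton c)) (ih hv)

variable [IsSimpleModule A V]

theorem finrank_wordOrbit_add_le (hS : IsGeneratingSystem F S) (hu : u ≠ 0) {i d : ℕ}
    (hd : ∀ j < i + d, wordOrbit F S u j ≠ ⊤) :
    Module.finrank F (wordOrbit F S u i) + d ≤ Module.finrank F (wordOrbit F S u (i + d)) := by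
  induction d with
  | zero => rfl
  | succ d ih =>
    have hlt := Submodule.finrank_lt_finrank_of_lt (wordOrbit_lt_succ hS hu (hd (i + d) (by omega)))
    have hle := ih fun j hj ↦ hd j (by omega)
    rw [← add_assoc i d 1]
    omega

theorem succ_le_finrank_wordOrbit (hS : IsGeneratingSystem F S) (hu : u ≠ 0) {i : ℕ}
    (hi : ∀ j < i, wordOrbit F S u j ≠ ⊤) : i + 1 ≤ Module.finrank F (wordOrbit F S u i) := by
  have hle := finrank_wordOrbit_add_le hS hu (i := 0) (d := i) (by simpa using hi)
  rwa [wordOrbit_zero, finrank_span_singleton hu, zero_add, add_comm] at hle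

theorem wordOrbit_finrank_sub_one_eq_top (hS : IsGeneratingSystem F S) (hu : u ≠ 0) :
    wordOrbit F S u (Module.finrank F V - 1) = ⊤ := by
  by_contra htop
  have hle := succ_le_finrank_wordOrbit hS hu fun j (hj : j < Module.finrank F V - 1) hjtop ↦
    htop (top_le_iff.1 (hjtop ▸ wordOrbit_mono hj.le))
  have hlt := Submodule.finrank_lt htop
  omega

theorem exists_mem_wordSpan_one_finrank_le_natDegree_minpoly [Infinite F]
    [Algebra.IsIntegral F A] (hS : IsGeneratingSystem F S) (hu : u ≠ 0)
    (hne : wordOrbit F S u (Module.finrank F V - 2) ≠ ⊤) :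
    ∃ c ∈ wordSpan F S 1, Module.finrank F V ≤ (minpoly F c).natDegree := by
  set d := Module.finrank F V - 1
  have htop : wordOrbit F S u d = ⊤ := wordOrbit_finrank_sub_one_eq_top hS hu
  have hproper : ∀ i < d, wordOrbit F S u i ≠ ⊤ := fun i hi hitop ↦
    hne (top_le_iff.1 (hitop ▸ wordOrbit_mono (by omega)))
  have hgrowth : ∀ i < d, Module.finrank F (wordOrbit F S u (i + 1)) ≤
      Module.finrank F (wordOrbit F S u i) + 1 := fun i hi ↦ by
    have hlower := succ_le_finrank_wordOrbit hS hu fun j hj ↦ hproper j (hj.trans hi)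
    have hupper := finrank_wordOrbit_add_le hS hu (i := i + 1) (d := d - (i + 1))
      fun j hj ↦ hproper j (by omega)
    have hle := Submodule.finrank_le (wordOrbit F S u (i + 1 + (d - (i + 1))))
    omega
  obtain ⟨c, hc, hmove⟩ := exists_mem_wordSpan_one_moving_wordOrbit hS hu hproper
  have hcyclic : wordOrbit F {c} u d = ⊤ :=
    top_le_iff.1 (htop.ge.trans (wordOrbit_le_wordOrbit_singleton hc hmove hgrowth))
  refine ⟨c, hc, ?_⟩
  calc Module.finrank F V
      = Module.finrank F (wordOrbit F {c} u d) := by rw [hcyclic, finrank_top]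
    _ ≤ (minpoly F c).natDegree := finrank_wordOrbit_singleton_le c u d

end WordOrbit

section Rank

variable {F l m n o : Type*} [Field F]

theorem finrank_map_add_finrank_inf_ker {V W : Type*} [AddCommGroup V] [Module F V]
    [AddCommGroup W] [Module F W] (f : V →ₗ[F] W) (P : Submodule F V) [Module.Finite F P] :
    Module.finrank F (P.map f) + Module.finrank F (P ⊓ LinearMap.ker f : Submodule F V) =
      Module.finrank F P := by
  rw [← LinearMap.finrank_range_add_finrank_ker (f.domRestrict P), LinearMap.range_domRestrict,
    LinearMap.ker_domRestrict, ← Submodule.map_comap_subtype, Submodule.finrank_map_subtype_eq]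

theorem rank_mul_add_rank_mul_le [Fintype m] [Fintype n] [Fintype o] (A : Matrix l m F)
    (B : Matrix m n F) (C : Matrix n o F) :
    (A * B).rank + (B * C).rank ≤ B.rank + (A * B * C).rank := by
  have hB := finrank_map_add_finrank_inf_ker A.mulVecLin (LinearMap.range B.mulVecLin)
  have hBC := finrank_map_add_finrank_inf_ker A.mulVecLin (LinearMap.range (B * C).mulVecLin)
  rw [← LinearMap.range_comp, ← Matrix.mulVecLin_mul] at hB hBC
  have hrange : LinearMap.range (B * C).mulVecLin ≤ LinearMap.range B.mulVecLin := by
    rw [Matrix.mulVecLin_mul]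
    exact LinearMap.range_comp_le_range _ _
  have hle := Submodule.finrank_mono (inf_le_inf_right (LinearMap.ker A.mulVecLin) hrange)
  rw [← Matrix.mul_assoc] at hBC
  simp only [Matrix.rank]
  omega

theorem rank_pos_of_ne_zero [Fintype n] {M : Matrix m n F} (hM : M ≠ 0) : 0 < M.rank := by
  classical
  refine Nat.pos_of_ne_zero fun h0 ↦ hM (Matrix.toLin'.injective ?_)
  rw [map_zero]
  exact LinearMap.range_eq_bot.1 (Submodule.finrank_eq_zero.1 h0)

theorem exists_eq_vecMulVec_of_rank_le_one [Fintype n] {M : Matrix m n F} (hM : M.rank ≤ 1) :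
    ∃ u v, M = vecMulVec u v := by
  classical
  obtain ⟨u, hu⟩ := finrank_le_one_iff.1 hM
  choose c hc using fun j ↦ hu ⟨M.mulVecLin (Pi.single j 1), LinearMap.mem_range_self _ _⟩
  refine ⟨u, c, Matrix.ext fun i j ↦ ?_⟩
  have hcol := congrFun (congrArg Subtype.val (hc j)) i
  simpa [vecMulVec_apply, mul_comm] using hcol.symm

variable {ι : Type*} [Fintype ι] [DecidableEq ι] {A : Matrix ι ι F}

theorem natDegree_minpoly_le_card (A : Matrix ι ι F) :
    (minpoly F A).natDegree ≤ Fintype.card ι :=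
  (natDegree_le_of_dvd (minpoly_dvd_charpoly A) A.charpoly_monic.ne_zero).trans_eq
    A.charpoly_natDegree_eq_dim

theorem mul_natDegree_le_rank_aeval {c : ℕ}
    (hc : ∀ B ∈ Algebra.adjoin F {A}, B ≠ 0 → c ≤ B.rank) {q r : F[X]}
    (hqr : q * r = minpoly F A) (hr : r.Splits) : c * r.natDegree ≤ (aeval A q).rank := by
  induction hd : r.natDegree generalizing q r with
  | zero => simp only [mul_zero, zero_le]
  | succ d ih =>
    obtain ⟨μ, hμ⟩ := hr.exists_eval_eq_zero (by
      rw [degree_eq_natDegree (by rintro rfl; simp at hd), hd]; exact_mod_cast d.succ_ne_zero)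
    obtain ⟨r, rfl⟩ := dvd_iff_isRoot.2 hμ
    have hmin : minpoly F A ≠ 0 := minpoly.ne_zero (Algebra.IsIntegral.isIntegral A)
    have hX := X_sub_C_ne_zero μ
    obtain ⟨hq0, hr0⟩ : q ≠ 0 ∧ r ≠ 0 := by
      constructor <;> rintro rfl <;> simp [← hqr] at hmin
    have hlower := ih (q := (X - Polynomial.C μ) * q) (by rw [← hqr]; ring)
      (hr.of_dvd (mul_ne_zero hX hr0) (dvd_mul_left _ _))
      (by rw [natDegree_mul hX hr0, natDegree_X_sub_C] at hd; omega)
    have hne : aeval A (q * r) ≠ 0 := fun h0 ↦ by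
      have hμe := natDegree_le_of_dvd (minpoly.dvd F A h0) (mul_ne_zero hq0 hr0)
      rw [← hqr, mul_left_comm, natDegree_mul hX (mul_ne_zero hq0 hr0), natDegree_X_sub_C] at hμe
      omega
    -- Multiplying `q` by `X - μ` costs at least the rank of the cofactor `minpoly F A / (X - μ)`.
    have hcofactor := hc _ (aeval_mem_adjoin_singleton F A) hne
    have hzero : aeval A (X - Polynomial.C μ) * aeval A q * aeval A r = 0 := by
      rw [← map_mul, ← map_mul, mul_right_comm, mul_comm, hqr, minpoly.aeval]
    have hfrob := rank_mul_add_rank_mul_le (aeval A (X - Polynomial.C μ)) (aeval A q) (aeval A r)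
    rw [hzero, Matrix.rank_zero, ← map_mul, ← map_mul] at hfrob
    rw [mul_add, mul_one]
    omega

theorem exists_mem_adjoin_rank_eq_one (hsplits : (minpoly F A).Splits)
    (hdeg : Fintype.card ι < 2 * (minpoly F A).natDegree) :
    ∃ B ∈ Algebra.adjoin F {A}, B.rank = 1 := by
  by_contra! hne
  have hμe := mul_natDegree_le_rank_aeval (c := 2) (q := 1) (fun B hB hB0 ↦ by
    have hrank := hne B hB
    have hpos := rank_pos_of_ne_zero hB0
    omega) (one_mul _) hsplits
  rw [map_one, rank_one] at hμe
  omega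

theorem natDegree_minpoly_le_rank_sub_algebraMap_add_one (hsplits : (minpoly F A).Splits) (μ : F) :
    (minpoly F A).natDegree ≤ (A - algebraMap F _ μ).rank + 1 := by
  by_cases hμ : μ ∈ spectrum F A
  · cases isEmpty_or_nonempty ι
    · exact absurd hμ (by simp [spectrum.of_subsingleton])
    have hroot : (minpoly F A).IsRoot μ := by
      simpa [minpoly.aeval] using
        spectrum.subset_polynomial_aeval A (minpoly F A) (Set.mem_image_of_mem _ hμ)
    obtain ⟨r, hr⟩ := dvd_iff_isRoot.2 hroot
    have hmin : minpoly F A ≠ 0 := minpoly.ne_zero (Algebra.IsIntegral.isIntegral A)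
    have hr0 : r ≠ 0 := by rintro rfl; simp [hr] at hmin
    have hμe := mul_natDegree_le_rank_aeval (fun B _ hB ↦ rank_pos_of_ne_zero hB) hr.symm
      (hsplits.of_dvd hmin ⟨_, by rw [hr, mul_comm]⟩)
    rw [hr, natDegree_mul (X_sub_C_ne_zero μ) hr0, natDegree_X_sub_C]
    simp only [map_sub, aeval_X, aeval_C] at hμe
    omega
  · have hunit : IsUnit (A - algebraMap F _ μ) := by
      simpa [neg_sub] using (spectrum.notMem_iff.1 hμ).neg
    exact (natDegree_minpoly_le_card A).trans (rank_of_isUnit _ hunit ▸ Nat.le_succ _)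

end Rank

theorem exists_dual_eigenvector_of_ne_top {F V : Type*} [Field F] [IsAlgClosed F] [AddCommGroup V]
    [Module F V] [Module.Finite F V] {T : Module.End F V} {W : Submodule F V} (hW : W ≠ ⊤)
    (hT : ∀ v ∈ W, T v ∈ W) :
    ∃ f : Module.Dual F V, f ≠ 0 ∧ (∀ v ∈ W, f v = 0) ∧ ∃ μ : F, ∀ v, f (T v) = μ * f v := by
  have : Nontrivial W.dualAnnihilator := by
    rwa [Submodule.nontrivial_iff_ne_bot, ← Submodule.dualAnnihilator_top, ne_eq,
      Subspace.dualAnnihilator_inj]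
  have hdual : ∀ f ∈ W.dualAnnihilator, T.dualMap f ∈ W.dualAnnihilator := by
    simp only [Submodule.mem_dualAnnihilator]
    exact fun f hf v hv ↦ hf _ (hT v hv)
  obtain ⟨μ, hμ⟩ := Module.End.exists_eigenvalue (K := F) (V := W.dualAnnihilator)
    (T.dualMap.restrict hdual)
  obtain ⟨⟨f, hf⟩, hfμ⟩ := hμ.exists_hasEigenvector
  refine ⟨f, fun h0 ↦ hfμ.2 (Subtype.ext h0), (Submodule.mem_dualAnnihilator f).1 hf, μ, fun v ↦ ?_⟩
  exact LinearMap.congr_fun (congrArg Subtype.val hfμ.apply_eq_smul) v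

section TraceForm

variable {F ι : Type*} [Field F] [Fintype ι]

theorem exists_trace_mul_eq (f : Module.Dual F (Matrix ι ι F)) :
    ∃ Y : Matrix ι ι F, ∀ X, f X = trace (Y * X) := by
  classical
  refine ⟨of fun j i ↦ f (single i j 1), fun X ↦ ?_⟩
  have hf : f = traceLinearMap ι F F ∘ₗ LinearMap.mulLeft F (of fun j i ↦ f (single i j 1)) :=
    Matrix.ext_linearMap F fun i j ↦ LinearMap.ext_ring (by simp [trace_mul_single])
  exact LinearMap.congr_fun hf X

theorem exists_left_eigenmatrix_of_ne_top [DecidableEq ι] [IsAlgClosed F] {C : Matrix ι ι F}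
    {W : Submodule F (Matrix ι ι F)} (hW : W ≠ ⊤) (hC : ∀ X ∈ W, C * X ∈ W) :
    ∃ Y : Matrix ι ι F, Y ≠ 0 ∧ (∃ μ : F, Y * (C - algebraMap F _ μ) = 0) ∧
      ∀ X ∈ W, trace (Y * X) = 0 := by
  obtain ⟨f, hf0, hfW, μ, hμ⟩ :=
    exists_dual_eigenvector_of_ne_top (T := LinearMap.mulLeft F C) hW hC
  obtain ⟨Y, hY⟩ := exists_trace_mul_eq f
  refine ⟨Y, ?_, ⟨μ, ?_⟩, fun X hX ↦ hY X ▸ hfW X hX⟩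
  · rintro rfl
    exact hf0 (LinearMap.ext fun X ↦ by simp [hY])
  · refine ext_iff_trace_mul_right.2 fun X ↦ ?_
    have hCX := hμ X
    simp only [hY, LinearMap.mulLeft_apply] at hCX
    simp [mul_sub, sub_mul, Matrix.mul_assoc, hCX, Algebra.algebraMap_eq_smul_one]

end TraceForm

section MatrixWords

variable {F ι : Type*} [Field F] [Fintype ι] [DecidableEq ι] {S : Set (Matrix ι ι F)}

instance isSimpleModule_pi_matrix [Nonempty ι] : IsSimpleModule (Matrix ι ι F) (ι → F) := by
  refine isSimpleModule_iff_toSpanSingleton_surjective.2 ⟨inferInstance, fun u hu x ↦ ?_⟩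
  obtain ⟨a, ha⟩ := Function.ne_iff.1 hu
  exact ⟨vecMulVec x (Pi.single a (u a)⁻¹), by simp [vecMulVec_mulVec, inv_mul_cancel₀ ha]⟩

theorem transpose_mem_wordSpan {i : ℕ} {X : Matrix ι ι F} (hX : X ∈ wordSpan F S i) :
    Xᵀ ∈ wordSpan F (transpose '' S) i := by
  have hmap : (wordSpan F S i).map (transposeLinearEquiv ι ι F F).toLinearMap ≤
      wordSpan F (transpose '' S) i := by
    rw [wordSpan, Submodule.map_span_le]
    rintro _ ⟨l, hl, hlS, rfl⟩
    refine Submodule.subset_span ⟨(l.map transpose).reverse, by simpa using hl, ?_,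
      (transpose_list_prod l).symm⟩
    simpa using fun a ha ↦ Set.mem_image_of_mem transpose (hlS a ha)
  exact hmap (Submodule.mem_map_of_mem hX)

theorem isGeneratingSystem_transpose_image (hS : IsGeneratingSystem F S) :
    IsGeneratingSystem F (transpose '' S) := fun X ↦ by
  obtain ⟨i, hi⟩ := hS Xᵀ
  exact ⟨i, transpose_mem_wordSpan hi⟩

theorem exists_mem_wordSpan_vecMul_eq {v : ι → F} {j : ℕ}
    (hv : wordOrbit F (transpose '' S) v j = ⊤) (w : ι → F) : ∃ X ∈ wordSpan F S j, v ᵥ* X = w := by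
  obtain ⟨X, hX, hXv⟩ := mem_wordOrbit.1 (hv ▸ Submodule.mem_top : w ∈ _)
  refine ⟨Xᵀ, by simpa [Set.image_image] using transpose_mem_wordSpan hX, ?_⟩
  rwa [vecMul_transpose]

theorem wordSpan_eq_top_of_vecMulVec_mem {u v : ι → F} {i j k : ℕ}
    (hu : wordOrbit F S u i = ⊤) (hv : wordOrbit F (transpose '' S) v k = ⊤)
    (huv : vecMulVec u v ∈ wordSpan F S j) : wordSpan F S (i + j + k) = ⊤ := by
  refine eq_top_iff.2 fun X _ ↦ X.induction_on' (zero_mem _) (fun _ _ ↦ add_mem) fun a b c ↦ ?_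
  obtain ⟨Y, hY, hYu⟩ := mem_wordOrbit.1 (hu ▸ Submodule.mem_top : Pi.single a 1 ∈ _)
  obtain ⟨Z, hZ, hvZ⟩ := exists_mem_wordSpan_vecMul_eq hv (Pi.single b c)
  have hsandwich : single a b c = Y * vecMulVec u v * Z := by
    rw [mul_vecMulVec, vecMulVec_mul, ← smul_eq_mulVec, hYu, hvZ]
    ext
    simp only [single_apply, vecMulVec_apply, Pi.single_apply]
    grind
  rw [hsandwich]
  exact mul_mem_wordSpan (mul_mem_wordSpan hY huv) hZ

theorem wordSpan_eq_top_of_card_le_natDegree_minpoly [IsAlgClosed F] [Nonempty ι]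
    (hS : IsGeneratingSystem F S) {C : Matrix ι ι F} (hC : C ∈ wordSpan F S 1)
    (hdeg : Fintype.card ι ≤ (minpoly F C).natDegree) :
    wordSpan F S (2 * (Fintype.card ι - 1)) = ⊤ := by
  set n := Fintype.card ι
  have hdeg : (minpoly F C).natDegree = n := hdeg.antisymm' (natDegree_minpoly_le_card C)
  let W := (Algebra.adjoin F {C}).toSubmodule * wordSpan F S (n - 1)
  have hW : W ≤ wordSpan F S (2 * (n - 1)) := by
    rw [two_mul]
    exact (mul_le_mul_left (hdeg ▸ adjoin_singleton_le_wordSpan hC) _).trans (wordSpan_mul_le _ _)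
  by_contra hne
  have hCW : ∀ X ∈ W, C * X ∈ W := fun X hX ↦ by
    have hCX := Submodule.mul_mem_mul
      ((Subalgebra.mem_toSubmodule _).2 (Algebra.self_mem_adjoin_singleton F C)) hX
    rwa [← mul_assoc, Subalgebra.isIdempotentElem_toSubmodule] at hCX
  obtain ⟨Y, hY0, ⟨μ, hYC⟩, hYW⟩ :=
    exists_left_eigenmatrix_of_ne_top (fun htop ↦ hne (top_le_iff.1 (htop ▸ hW))) hCW
  have hYrank : Y.rank ≤ 1 := by
    have hYCrank := rank_add_rank_le_card_of_mul_eq_zero hYC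
    have hCrank :=
      natDegree_minpoly_le_rank_sub_algebraMap_add_one (IsAlgClosed.splits (minpoly F C)) μ
    omega
  obtain ⟨u, v, rfl⟩ := exists_eq_vecMulVec_of_rank_le_one hYrank
  obtain ⟨hu, hv⟩ := not_or.1 (vecMulVec_eq_zero.not.1 hY0)
  have hrow := wordOrbit_finrank_sub_one_eq_top (isGeneratingSystem_transpose_image hS) hv
  rw [Module.finrank_fintype_fun_eq_card] at hrow
  refine hu (dotProduct_eq_zero u fun w ↦ ?_)
  obtain ⟨X, hX, rfl⟩ := exists_mem_wordSpan_vecMul_eq hrow w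
  have hXW : X ∈ W := by
    simpa using Submodule.mul_mem_mul
      ((Subalgebra.mem_toSubmodule _).2 (one_mem (Algebra.adjoin F {C}))) hX
  rw [← trace_vecMulVec, ← vecMulVec_mul, hYW X hXW]

theorem genLength_le_of_card_lt_two_mul_natDegree_minpoly [IsAlgClosed F] [Nontrivial ι]
    (hS : IsGeneratingSystem F S) {A : Matrix ι ι F} (hA : A ∈ wordSpan F S 1)
    (hdeg : Fintype.card ι < 2 * (minpoly F A).natDegree) :
    genLength F S ≤ 2 * Fintype.card ι + (minpoly F A).natDegree - 4 := by
  have hcard := Fintype.one_lt_card (α := ι)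
  obtain ⟨B, hBA, hBrank⟩ := exists_mem_adjoin_rank_eq_one (IsAlgClosed.splits _) hdeg
  obtain ⟨u, v, rfl⟩ := exists_eq_vecMulVec_of_rank_le_one hBrank.le
  have hB0 : vecMulVec u v ≠ 0 := fun h0 ↦ by simp [h0] at hBrank
  obtain ⟨hu, hv⟩ := not_or.1 (vecMulVec_eq_zero.not.1 hB0)
  have hrow := wordOrbit_finrank_sub_one_eq_top (isGeneratingSystem_transpose_image hS) hv
  by_cases hcol : wordOrbit F S u (Module.finrank F (ι → F) - 2) = ⊤
  · refine (genLength_le (wordSpan_eq_top_of_vecMulVec_mem hcol hrow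
      (adjoin_singleton_le_wordSpan hA hBA))).trans ?_
    rw [Module.finrank_fintype_fun_eq_card]
    omega
  · obtain ⟨C, hC, hCdeg⟩ := exists_mem_wordSpan_one_finrank_le_natDegree_minpoly hS hu hcol
    rw [Module.finrank_fintype_fun_eq_card] at hCdeg
    refine (genLength_le (wordSpan_eq_top_of_card_le_natDegree_minpoly hS hC hCdeg)).trans ?_
    omega

end MatrixWords

theorem length_le_of_minpoly_deg_gt_half_odd_general {F ι : Type*} [Field F] [IsAlgClosed F]
    [Fintype ι] [DecidableEq ι] (hι : 3 ≤ Fintype.card ι) {S : Set (Matrix ι ι F)}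
    (hS : IsGeneratingSystem F S) {A : Matrix ι ι F} (hA : A ∈ wordSpan F S 1)
    (hdeg : Fintype.card ι < 2 * (minpoly F A).natDegree) :
    genLength F S ≤ 3 * Fintype.card ι - 5 := by
  have : Nontrivial ι := Fintype.one_lt_card_iff_nontrivial.1 (by omega)
  rcases (natDegree_minpoly_le_card A).lt_or_eq with hlt | heq
  · have hle := genLength_le_of_card_lt_two_mul_natDegree_minpoly hS hA hdeg
    omega
  · have hle := genLength_le (wordSpan_eq_top_of_card_le_natDegree_minpoly hS hA heq.ge)
    omega

theorem length_le_of_minpoly_deg_gt_half_odd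
    (F : Type*) [Field F] [IsAlgClosed F] (t k n : ℕ)
    (ht : 0 < t) (hk1 : 1 ≤ k) (hk2 : k ≤ t + 1) (hn : n = 2 * t + 1)
    (S : Finset (Matrix (Fin n) (Fin n) F))
    (hgen : IsGeneratingSystem F (S : Set (Matrix (Fin n) (Fin n) F)))
    (hm : S.sup (fun M => (minpoly F M).natDegree) = t + k) :
    genLength F (S : Set (Matrix (Fin n) (Fin n) F)) ≤ 3 * n - 5 := by
  obtain ⟨A, hA, hAt⟩ : ∃ A ∈ S, t < (minpoly F A).natDegree := by
    rw [← Finset.lt_sup_iff, hm]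
    omega
  have hle := length_le_of_minpoly_deg_gt_half_odd_general (by rw [Fintype.card_fin]; omega) hgen
    (mem_wordSpan_one hA) (by rw [Fintype.card_fin]; omega)
  rwa [Fintype.card_fin] at hle
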